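/- arXiv:2511.07492 — 5 statements merged into one kernel-verified Lean document; each statement's English description precedes it below -/
import Mathlib

section
/- Let G be a group acting on a type Ω such that for every natural number n, the diagonal action of G on n-tuples from Ω (i.e., on functions Fin n → Ω) has only finitely many orbits. Then for every m and every tuple a : Fin m → Ω, the pointwise stabilizer H = {g ∈ G : ∀ i, g • (a i) = a i} also has, for every natural number n, only finitely many orbits on functions Fin n → Ω. -/
/-- If a group `G` acts on `Ω` oligomorphically (finitely many orbits on `n`-tuples for
every `n`), then the pointwise stabilizer of any finite tuple also acts oligomorphically. -/
theorem stmt0 {G Ω : Type*} [Group G] [MulAction G Ω]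
    (hG : ∀ n : ℕ, Finite (MulAction.orbitRel.Quotient G (Fin n → Ω)))
    (m : ℕ) (a : Fin m → Ω)
    (H : Subgroup G) (hH : ∀ g : G, g ∈ H ↔ ∀ i : Fin m, g • a i = a i) :
    ∀ n : ℕ, Finite (MulAction.orbitRel.Quotient H (Fin n → Ω)) := by
  intro n
  haveI := hG (m + n)
  let f : MulAction.orbitRel.Quotient H (Fin n → Ω) →
      MulAction.orbitRel.Quotient G (Fin (m + n) → Ω) :=
    fun q => Quotient.mk (MulAction.orbitRel G (Fin (m + n) → Ω)) (Fin.append a (Quotient.out q))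
  refine Finite.of_injective f ?_
  intro p q hpq
  obtain ⟨g, hg⟩ : Fin.append a (Quotient.out p) ∈
      MulAction.orbit G (Fin.append a (Quotient.out q)) := Quotient.exact hpq
  have hgH : g ∈ H := by
    rw [hH]
    intro i
    have := congrFun hg (Fin.castAdd n i)
    simpa using this
  have hgx : g • Quotient.out q = Quotient.out p := by
    funext i
    have := congrFun hg (Fin.natAdd m i)
    simpa using this
  rw [← Quotient.out_eq p, ← Quotient.out_eq q]
  exact Quotient.sound ⟨⟨g, hgH⟩, hgx⟩
end

section
/- Let G be a group such that for every natural number n, the diagonal action of the automorphism group Aut(G) on n-tuples of elements of G (i.e., on functions Fin n → G, acting coordinatewise) has only finitely many orbits. Then G is locally finite: every finitely generated subgroup of G is finite. -/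
/-- If the automorphism group of a group `G` acts with finitely many orbits on `n`-tuples
of elements of `G` for every `n`, then `G` is locally finite: every finitely generated
subgroup of `G` is finite. -/
theorem stmt1 {G : Type*} [Group G]
    (hG : ∀ n : ℕ, Finite (MulAction.orbitRel.Quotient (MulAut G) (Fin n → G)))
    (S : Subgroup G) (hS : S.FG) : Finite S := by
  obtain ⟨T, rfl⟩ := hS
  let g : Fin T.card → G := fun i => (T.equivFin.symm i : G)
  have := hG (T.card + 1)
  let f : Subgroup.closure (T : Set G) →
      MulAction.orbitRel.Quotient (MulAut G) (Fin (T.card + 1) → G) :=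
    fun s => Quotient.mk _ (Fin.cons (s : G) g : Fin (T.card + 1) → G)
  refine Finite.of_injective f ?_
  intro s t hst
  have h := Quotient.exact hst
  obtain ⟨φ, hφ⟩ := h
  have h0 : φ (t : G) = s := congrFun hφ 0
  have hT : Set.EqOn (φ.toMonoidHom) (MonoidHom.id G) (T : Set G) := by
    intro x hx
    have h1 : φ (g (T.equivFin ⟨x, hx⟩)) = g (T.equivFin ⟨x, hx⟩) :=
      congrFun hφ (Fin.succ (T.equivFin ⟨x, hx⟩))
    simpa [g] using h1
  have h2 : φ (t : G) = t := MonoidHom.eqOn_closure hT t.2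
  exact Subtype.ext (h0.symm.trans h2)
end

section
/- Let G be a group such that for every natural number n, the diagonal action of the automorphism group Aut(G) on n-tuples of elements of G (i.e., on functions Fin n → G, acting coordinatewise) has only finitely many orbits. Then G has finite exponent: there exists a positive integer N such that g^N = 1 for every g ∈ G. -/
/-- If the automorphism group of a group `G` acts with finitely many orbits on `n`-tuples
of elements of `G` for every `n`, then `G` has finite exponent. -/
theorem stmt2 {G : Type*} [Group G]
    (hG : ∀ n : ℕ, Finite (MulAction.orbitRel.Quotient (MulAut G) (Fin n → G))) :
    ∃ N : ℕ, 0 < N ∧ ∀ g : G, g ^ N = 1 := by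
  classical
  have := hG 2
  let Q := MulAction.orbitRel.Quotient (MulAut G) (Fin 2 → G)
  have : Fintype Q := Fintype.ofFinite Q
  refine ⟨(Fintype.card Q).factorial, Nat.factorial_pos _, fun g => ?_⟩
  let f : Fin (Fintype.card Q + 1) → Q := fun k =>
    Quotient.mk (MulAction.orbitRel (MulAut G) (Fin 2 → G)) ![g, g ^ (k : ℕ)]
  have key : ∀ k l : Fin (Fintype.card Q + 1), f k = f l → g ^ (k : ℕ) = g ^ (l : ℕ) := by
    intro k l h
    have h' : MulAction.orbitRel (MulAut G) (Fin 2 → G) ![g, g ^ (k : ℕ)] ![g, g ^ (l : ℕ)] :=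
      Quotient.exact h
    rw [MulAction.orbitRel_apply] at h'
    obtain ⟨σ, hσ⟩ := h'
    have h0 : σ g = g := congrFun hσ 0
    have h1 : σ (g ^ (l : ℕ)) = g ^ (k : ℕ) := congrFun hσ 1
    rw [← h1, map_pow, h0]
  have main : ∀ k l : Fin (Fintype.card Q + 1), k < l → f k = f l →
      g ^ (Fintype.card Q).factorial = 1 := by
    intro k l hkl h
    have hkl' : (k : ℕ) < l := hkl
    have h2 : g ^ ((l : ℕ) - k) = 1 := by
      rw [pow_sub g hkl'.le, key k l h, mul_inv_cancel]
    obtain ⟨c, hc⟩ := Nat.dvd_factorial (m := (l : ℕ) - k) (n := Fintype.card Q)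
      (by omega) (by omega)
    rw [hc, pow_mul, h2, one_pow]
  obtain ⟨k, l, hne, h⟩ := Fintype.exists_ne_map_eq_of_card_lt f (by simp)
  rcases lt_or_gt_of_ne hne with hlt | hlt
  · exact main k l hlt h
  · exact main l k hlt h.symm
end

section
/- Let G be a group whose FC-centre Z̃(G) = {g ∈ G : the conjugacy class of g is finite} is a finite (normal) subgroup. Then the FC-centre of the quotient group G/Z̃(G) is trivial; equivalently, every element g ∈ G whose image in G/Z̃(G) has finite conjugacy class already lies in Z̃(G). -/
/-- If the FC-centre `Z̃(G)` (the set of elements with finite conjugacy class) of a group `G`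
is a finite normal subgroup, then the FC-centre of `G ⧸ Z̃(G)` is trivial: any `g : G` whose
image in the quotient has finite conjugacy class already lies in `Z̃(G)`. -/
theorem stmt3 {G : Type*} [Group G] (Z : Subgroup G) [Z.Normal]
    (hZ : ∀ g : G, g ∈ Z ↔ ({x : G | ∃ h : G, h * g * h⁻¹ = x}).Finite)
    (hfin : Finite Z) (g : G)
    (hg : ({x : G ⧸ Z | ∃ h : G ⧸ Z, h * (g : G ⧸ Z) * h⁻¹ = x}).Finite) :
    g ∈ Z := by
  rw [hZ]
  have key : ((fun x : G => (x : G ⧸ Z)) ⁻¹'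
      {x : G ⧸ Z | ∃ h : G ⧸ Z, h * (g : G ⧸ Z) * h⁻¹ = x}).Finite := by
    refine Set.Finite.preimage' hg ?_
    intro b _
    obtain ⟨a, rfl⟩ := QuotientGroup.mk_surjective b
    have hZf : (Z : Set G).Finite := Set.toFinite _
    refine (hZf.image (fun z => a * z)).subset ?_
    intro x hx
    have hx' : (x : G ⧸ Z) = (a : G ⧸ Z) := hx
    exact ⟨a⁻¹ * x, QuotientGroup.eq.mp hx'.symm, by simp⟩
  refine key.subset ?_
  rintro x ⟨h, rfl⟩
  exact ⟨(h : G ⧸ Z), rfl⟩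
end

section
/- Let B be an abelian group (written additively) and let H be a group acting on B by group automorphisms. Assume: (i) there exists a natural number n such that every H-orbit in B has at most n elements, and (ii) for every h ∈ H the fixed-point subgroup C_B(h) = {b ∈ B : h • b = b} has finite index in B. Then the subgroup [H, B] of B generated by the set {h • b − b : h ∈ H, b ∈ B} is contained in a finitely generated subgroup of B. In particular, if in addition B has finite exponent, then [H, B] is finite. -/
/-- Let a group `H` act by automorphisms on an abelian group `B`. If all `H`-orbits in `B`
have uniformly bounded (finite) size, and every `h ∈ H` has fixed-point subgroup of finite
index in `B`, then the subgroup `[H, B]` generated by `{h • b - b}` is contained in a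
finitely generated subgroup of `B`; if moreover `B` has finite exponent, `[H, B]` is
finite. -/
theorem stmt7 {H B : Type*} [Group H] [AddCommGroup B] [DistribMulAction H B]
    (n : ℕ)
    (horb : ∀ b : B, (MulAction.orbit H b).Finite ∧ (MulAction.orbit H b).ncard ≤ n)
    (C : H → AddSubgroup B) (hC : ∀ (h : H) (b : B), b ∈ C h ↔ h • b = b)
    (hCfin : ∀ h : H, (C h).FiniteIndex) :
    (∃ S : AddSubgroup B, S.FG ∧
        AddSubgroup.closure {x : B | ∃ (h : H) (b : B), h • b - b = x} ≤ S) ∧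
      ((∃ e : ℕ, 0 < e ∧ ∀ b : B, e • b = 0) →
        Finite (AddSubgroup.closure {x : B | ∃ (h : H) (b : B), h • b - b = x})) := by
  have hfin : {x : B | ∃ (h : H) (b : B), h • b - b = x}.Finite := by
    obtain ⟨b₀, hb₀⟩ : ∃ b₀ : B, ∀ b : B,
        (MulAction.orbit H b).ncard ≤ (MulAction.orbit H b₀).ncard := by
      have hbdd : BddAbove (Set.range fun b : B => (MulAction.orbit H b).ncard) := by
        refine ⟨n, ?_⟩
        rintro _ ⟨b, rfl⟩
        exact (horb b).2
      obtain ⟨b₀, h0⟩ := Nat.sSup_mem (Set.range_nonempty _) hbdd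
      refine ⟨b₀, fun b => ?_⟩
      have h1 := le_csSup hbdd ⟨b, rfl⟩
      rw [← h0] at h1
      exact h1
    have hg : ∀ x : MulAction.orbit H b₀, ∃ g : H, g • b₀ = x := fun x => x.2
    choose g hg using hg
    haveI : Finite (MulAction.orbit H b₀) := (horb b₀).1
    let D : AddSubgroup B := ⨅ x : MulAction.orbit H b₀, C (g x)
    haveI hD : D.FiniteIndex := AddSubgroup.finiteIndex_iInf fun x => hCfin (g x)
    have key : ∀ d ∈ D, ∀ h : H, ∃ x ∈ MulAction.orbit H b₀, h • (b₀ + d) = x + d := by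
      intro d hd h
      have hd' : ∀ x, g x • d = d := fun x =>
        (hC _ _).1 ((AddSubgroup.mem_iInf.1 hd) x)
      have hsub : (fun x => x + d) '' MulAction.orbit H b₀ ⊆ MulAction.orbit H (b₀ + d) := by
        rintro _ ⟨x, hx, rfl⟩
        refine ⟨g ⟨x, hx⟩, ?_⟩
        simp only [smul_add, hg, hd']
      have heq := Set.eq_of_subset_of_ncard_le hsub (by
        rw [Set.ncard_image_of_injective _ (add_left_injective d)]
        exact hb₀ _) (horb _).1
      have hm : h • (b₀ + d) ∈ MulAction.orbit H (b₀ + d) := ⟨h, rfl⟩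
      rw [← heq] at hm
      obtain ⟨x, hx, hxe⟩ := hm
      exact ⟨x, hx, hxe.symm⟩
    have hF1 : (Set.image2 (fun x y : B => x - y) (MulAction.orbit H b₀)
        (MulAction.orbit H b₀)).Finite := (horb b₀).1.image2 _ (horb b₀).1
    have hF2 : (⋃ q : B ⧸ D, (fun x => x - q.out) '' MulAction.orbit H q.out).Finite :=
      Set.finite_iUnion fun q => (horb _).1.image _
    refine (hF2.image2 (fun x y => x + y) hF1).subset ?_
    rintro _ ⟨h, b, rfl⟩
    let q : B ⧸ D := (b : B ⧸ D)
    have hd : -q.out + b ∈ D := by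
      rw [← QuotientAddGroup.eq]
      exact Quotient.out_eq' q
    obtain ⟨x, hx, hxe⟩ := key _ hd h
    refine ⟨h • q.out - q.out, Set.mem_iUnion.2 ⟨q, h • q.out, ⟨h, rfl⟩, rfl⟩,
      x - h • b₀, ⟨x, hx, h • b₀, ⟨h, rfl⟩, rfl⟩, ?_⟩
    simp only [smul_add, smul_neg] at hxe
    have : x = h • b₀ + (-(h • q.out) + h • b) - (-q.out + b) := by rw [hxe]; abel
    simp only [this]
    abel
  have hfg : (AddSubgroup.closure {x : B | ∃ (h : H) (b : B), h • b - b = x}).FG :=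
    (AddSubgroup.fg_iff _).2 ⟨_, rfl, hfin⟩
  refine ⟨⟨_, hfg, le_rfl⟩, ?_⟩
  rintro ⟨e, he, hexp⟩
  haveI := (AddGroup.fg_iff_addSubgroup_fg _).2 hfg
  refine AddCommGroup.finite_of_fg_torsion _ fun x => ?_
  exact isOfFinAddOrder_iff_nsmul_eq_zero.2 ⟨e, he, Subtype.ext (hexp x)⟩
end
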